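/- arXiv:2401.00322 — 5 statements merged into one kernel-verified Lean document; each statement's English description precedes it below -/
import Mathlib

section
/- Let 𝒯 be a backward linear transfer on P(X) × P(X) with finite Mather constant c(𝒯) = inf_μ 𝒯(μ, μ), and let 𝒯_n denote the n-fold inf-convolution of 𝒯 with itself. Then c(𝒯) = lim_{n → ∞} (1/n) inf_{(μ,ν)} 𝒯_n(μ, ν). -/
open MeasureTheory Filter Topology
open scoped ENNReal

/-- The `n`-fold inf-convolution iterates of a transfer functional:
`iterT 𝒯 n` is `𝒯_{n+1} = 𝒯 ⋆ ⋯ ⋆ 𝒯` (`n+1` factors), where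
`(𝒯 ⋆ 𝒮)(μ, ν) = inf_σ { 𝒯(μ, σ) + 𝒮(σ, ν) }`. -/
noncomputable def iterT {X : Type*} [MeasurableSpace X]
    (𝒯 : ProbabilityMeasure X → ProbabilityMeasure X → EReal) :
    ℕ → ProbabilityMeasure X → ProbabilityMeasure X → EReal
  | 0 => 𝒯
  | n + 1 => fun μ ν => ⨅ σ : ProbabilityMeasure X, 𝒯 μ σ + iterT 𝒯 n σ ν

lemma exists_mix {X : Type*} [MeasurableSpace X] [TopologicalSpace X] [OpensMeasurableSpace X]
    (μ α : ProbabilityMeasure X) (t : ℝ) (h0 : 0 ≤ t) (h1 : t ≤ 1) :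
    ∃ ρ : ProbabilityMeasure X, (ρ : Measure X) =
        ENNReal.ofReal t • (μ : Measure X) + ENNReal.ofReal (1 - t) • (α : Measure X) ∧
      ∀ f : BoundedContinuousFunction X ℝ,
        ∫ x, f x ∂(ρ : Measure X) =
          t * ∫ x, f x ∂(μ : Measure X) + (1 - t) * ∫ x, f x ∂(α : Measure X) := by
  refine ⟨⟨ENNReal.ofReal t • (μ : Measure X) + ENNReal.ofReal (1 - t) • (α : Measure X),
    ⟨?_⟩⟩, rfl, ?_⟩
  · simp only [Measure.coe_add, Measure.coe_smul, Pi.add_apply, Pi.smul_apply, measure_univ,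
      smul_eq_mul, mul_one]
    rw [← ENNReal.ofReal_add h0 (by linarith)]
    simp
  · intro f
    simp only [ProbabilityMeasure.coe_mk]
    rw [integral_add_measure, integral_smul_measure, integral_smul_measure,
      ENNReal.toReal_ofReal h0, ENNReal.toReal_ofReal (by linarith : 0 ≤ 1 - t)]
    · simp
    · exact (f.integrable _).smul_measure ENNReal.ofReal_ne_top
    · exact (f.integrable _).smul_measure ENNReal.ofReal_ne_top

lemma iterT_lower {X : Type*} [MeasurableSpace X]
    (𝒯 : ProbabilityMeasure X → ProbabilityMeasure X → EReal) (m : ℝ)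
    (hm : ∀ μ ν, (m : EReal) ≤ 𝒯 μ ν) (n : ℕ) :
    ∀ μ ν, iterT 𝒯 n μ ν ≠ ⊥ := by
  have key : ∃ r : ℝ, ∀ μ ν, (r : EReal) ≤ iterT 𝒯 n μ ν := by
    induction n with
    | zero => exact ⟨m, hm⟩
    | succ n ih =>
      obtain ⟨r, hr⟩ := ih
      refine ⟨m + r, fun μ ν => ?_⟩
      rw [EReal.coe_add]
      exact le_iInf fun σ => add_le_add (hm _ _) (hr _ _)
  obtain ⟨r, hr⟩ := key
  intro μ ν h
  have := hr μ ν
  rw [h] at this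
  exact EReal.coe_ne_bot r (le_bot_iff.1 this)

lemma iterT_upper {X : Type*} [MeasurableSpace X]
    (𝒯 : ProbabilityMeasure X → ProbabilityMeasure X → EReal)
    (μ : ProbabilityMeasure X) (a : ℝ) (ha : 𝒯 μ μ ≤ a) (n : ℕ) :
    iterT 𝒯 n μ μ ≤ (((n + 1) * a : ℝ) : EReal) := by
  induction n with
  | zero => simpa [iterT] using ha
  | succ n ih =>
    refine (iInf_le _ μ).trans ((add_le_add ha ih).trans (le_of_eq ?_))
    rw [← EReal.coe_add]
    congr 1
    push_cast
    ring

lemma exists_avg {X : Type*} [MeasurableSpace X] [TopologicalSpace X] [OpensMeasurableSpace X]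
    (𝒯 : ProbabilityMeasure X → ProbabilityMeasure X → EReal) (m : ℝ)
    (hm : ∀ μ ν, (m : EReal) ≤ 𝒯 μ ν)
    (hconv : ∀ (μ₁ ν₁ μ₂ ν₂ μ ν : ProbabilityMeasure X) (t : ℝ), 0 ≤ t → t ≤ 1 →
      (μ : Measure X) =
        ENNReal.ofReal t • (μ₁ : Measure X) + ENNReal.ofReal (1 - t) • (μ₂ : Measure X) →
      (ν : Measure X) =
        ENNReal.ofReal t • (ν₁ : Measure X) + ENNReal.ofReal (1 - t) • (ν₂ : Measure X) →
      𝒯 μ ν ≤ (t : EReal) * 𝒯 μ₁ ν₁ + ((1 - t : ℝ) : EReal) * 𝒯 μ₂ ν₂) (n : ℕ) :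
    ∀ (μ ν : ProbabilityMeasure X) (a : ℝ), iterT 𝒯 n μ ν < (((n + 1) * a : ℝ) : EReal) →
      ∃ α β : ProbabilityMeasure X, 𝒯 α β ≤ a ∧ ∀ f : BoundedContinuousFunction X ℝ,
        (n + 1) * ∫ x, f x ∂(α : Measure X) + ∫ x, f x ∂(ν : Measure X) =
          (n + 1) * ∫ x, f x ∂(β : Measure X) + ∫ x, f x ∂(μ : Measure X) := by
  induction n with
  | zero =>
    intro μ ν a h
    refine ⟨μ, ν, ?_, fun f => ?_⟩
    · simpa [iterT] using h.le
    · push_cast; ring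
  | succ n ih =>
    intro μ ν a h
    obtain ⟨σ, hσ⟩ := iInf_lt_iff.1 h
    have hb1 : 𝒯 μ σ ≠ ⊥ := fun h => by
      have := hm μ σ
      rw [h] at this
      exact EReal.coe_ne_bot m (le_bot_iff.1 this)
    have hb2 := iterT_lower 𝒯 m hm n σ ν
    have ht1 : 𝒯 μ σ ≠ ⊤ := fun h => by
      rw [h, EReal.top_add_of_ne_bot hb2] at hσ
      exact not_top_lt hσ
    have ht2 : iterT 𝒯 n σ ν ≠ ⊤ := fun h => by
      rw [h, EReal.add_top_of_ne_bot hb1] at hσ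
      exact not_top_lt hσ
    obtain ⟨u, hu⟩ : ∃ u : ℝ, 𝒯 μ σ = u := ⟨_, (EReal.coe_toReal ht1 hb1).symm⟩
    obtain ⟨v, hv⟩ : ∃ v : ℝ, iterT 𝒯 n σ ν = v := ⟨_, (EReal.coe_toReal ht2 hb2).symm⟩
    rw [hu, hv, ← EReal.coe_add, EReal.coe_lt_coe_iff] at hσ
    push_cast at hσ
    have hn : (0 : ℝ) < n + 1 := by positivity
    have hn2 : (0 : ℝ) < n + 1 + 1 := by positivity
    obtain ⟨α, β, hαβ, hf⟩ := ih σ ν (((n + 1 + 1) * a - u) / (n + 1)) (by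
      rw [hv, EReal.coe_lt_coe_iff, mul_div_cancel₀ _ hn.ne']; linarith)
    have ht0 : (0 : ℝ) ≤ 1 / (n + 1 + 1) := by positivity
    have ht1 : (1 : ℝ) / (n + 1 + 1) ≤ 1 := by
      rw [div_le_one hn2]; linarith
    obtain ⟨α', hα', hα'f⟩ := exists_mix μ α _ ht0 ht1
    obtain ⟨β', hβ', hβ'f⟩ := exists_mix σ β _ ht0 ht1
    refine ⟨α', β', ?_, fun f => ?_⟩
    · refine (hconv _ _ _ _ _ _ _ ht0 ht1 hα' hβ').trans ?_
      rw [hu]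
      refine (add_le_add le_rfl (mul_le_mul_of_nonneg_left hαβ
        (EReal.coe_nonneg.2 (by linarith)))).trans (le_of_eq ?_)
      rw [← EReal.coe_mul, ← EReal.coe_mul, ← EReal.coe_add]
      congr 1
      field_simp
      ring
    · have := hf f
      rw [hα'f, hβ'f]
      push_cast
      field_simp
      linear_combination this

/-- For a backward linear transfer `𝒯` on `P(X) × P(X)` with finite
Mather constant `c(𝒯) = inf_μ 𝒯(μ, μ)`, one has
`c(𝒯) = lim_{n → ∞} (1/n) inf_{(μ,ν)} 𝒯_n(μ, ν)`. -/
theorem stmt4 {X : Type*} [MetricSpace X] [CompactSpace X] [MeasurableSpace X] [BorelSpace X]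
    (𝒯 : ProbabilityMeasure X → ProbabilityMeasure X → EReal)
    (hproper : ∃ μ ν, 𝒯 μ ν ≠ ⊤)
    (hbdd : ∃ m : ℝ, ∀ μ ν, (m : EReal) ≤ 𝒯 μ ν)
    (hlsc : LowerSemicontinuous
      (fun p : ProbabilityMeasure X × ProbabilityMeasure X => 𝒯 p.1 p.2))
    (hconv : ∀ (μ₁ ν₁ μ₂ ν₂ μ ν : ProbabilityMeasure X) (t : ℝ), 0 ≤ t → t ≤ 1 →
      (μ : Measure X) =
        ENNReal.ofReal t • (μ₁ : Measure X) + ENNReal.ofReal (1 - t) • (μ₂ : Measure X) →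
      (ν : Measure X) =
        ENNReal.ofReal t • (ν₁ : Measure X) + ENNReal.ofReal (1 - t) • (ν₂ : Measure X) →
      𝒯 μ ν ≤ (t : EReal) * 𝒯 μ₁ ν₁ + ((1 - t : ℝ) : EReal) * 𝒯 μ₂ ν₂)
    (hfin_top : (⨅ μ, 𝒯 μ μ) ≠ ⊤) (hfin_bot : (⨅ μ, 𝒯 μ μ) ≠ ⊥) :
    Tendsto
      (fun n : ℕ => ((((n : ℝ) + 1)⁻¹ : ℝ) : EReal) *
        ⨅ p : ProbabilityMeasure X × ProbabilityMeasure X, iterT 𝒯 n p.1 p.2)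
      atTop (nhds (⨅ μ, 𝒯 μ μ)) := by
  obtain ⟨m, hm⟩ := hbdd
  refine tendsto_order.2 ⟨fun L hL => ?_, fun L hL => ?_⟩
  · by_contra hcon
    obtain ⟨a, ha1, ha2⟩ := EReal.lt_iff_exists_real_btwn.1 hL
    have hfreq : ∃ᶠ n : ℕ in atTop, ∃ α β : ProbabilityMeasure X, 𝒯 α β ≤ a ∧
        ∀ f : BoundedContinuousFunction X ℝ,
        |∫ x, f x ∂(β : Measure X) - ∫ x, f x ∂(α : Measure X)| ≤ 2 * ‖f‖ / ((n : ℝ) + 1) := by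
      refine (not_eventually.1 hcon).mono fun n hn => ?_
      have hn1 : (0 : ℝ) < n + 1 := by positivity
      have hlt : (⨅ p : ProbabilityMeasure X × ProbabilityMeasure X, iterT 𝒯 n p.1 p.2) <
          (((n + 1) * a : ℝ) : EReal) := by
        by_contra hge
        rw [not_lt] at hge
        apply hn
        refine ha1.trans_le ?_
        refine le_trans (le_of_eq ?_) (mul_le_mul_of_nonneg_left hge
          (EReal.coe_nonneg.2 (by positivity)))
        rw [← EReal.coe_mul, inv_mul_cancel_left₀ hn1.ne']
      obtain ⟨p, hp⟩ := iInf_lt_iff.1 hlt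
      obtain ⟨α, β, hαβ, hf⟩ := exists_avg 𝒯 m hm hconv n _ _ _ hp
      refine ⟨α, β, hαβ, fun f => ?_⟩
      have h1 : ∀ ρ : ProbabilityMeasure X, |∫ x, f x ∂(ρ : Measure X)| ≤ ‖f‖ := fun ρ => by
        simpa using f.norm_integral_le_norm (ρ : Measure X)
      have h2 := abs_le.1 (h1 p.1)
      have h3 := abs_le.1 (h1 p.2)
      have h4 := hf f
      rw [le_div_iff₀ hn1]
      rw [← abs_of_pos hn1, ← abs_mul, abs_le]
      constructor <;> nlinarith
    obtain ⟨φ, hφ, hφS⟩ := extraction_of_frequently_atTop hfreq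
    choose α β hαβ hf using hφS
    obtain ⟨⟨α₀, β₀⟩, -, hcl⟩ := isCompact_univ.exists_mapClusterPt_of_frequently
      (l := atTop) (f := fun k => (α k, β k)) (Eventually.of_forall fun _ => trivial).frequently
    obtain ⟨U, hU, hlim⟩ := mapClusterPt_iff_ultrafilter.1 hcl
    have hα : Tendsto α U (𝓝 α₀) := (continuous_fst.tendsto _).comp hlim
    have hβ : Tendsto β U (𝓝 β₀) := (continuous_snd.tendsto _).comp hlim
    have hβ2 : Tendsto β U (𝓝 α₀) := by
      rw [ProbabilityMeasure.tendsto_iff_forall_integral_tendsto] at hα ⊢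
      intro f
      have hz : Tendsto (fun k => ∫ x, f x ∂(β k : Measure X) - ∫ x, f x ∂(α k : Measure X))
          U (𝓝 0) := by
        refine squeeze_zero_norm (fun k => hf k f) (Tendsto.mono_left ?_ hU)
        refine Tendsto.comp (g := fun n : ℕ => 2 * ‖f‖ / ((n : ℝ) + 1)) ?_ hφ.tendsto_atTop
        exact tendsto_const_nhds.div_atTop
          (tendsto_atTop_add_const_right _ _ tendsto_natCast_atTop_atTop)
      simpa using hz.add (hα f)
    have heq : α₀ = β₀ := tendsto_nhds_unique hβ2 hβ
    subst heq
    have hle : 𝒯 α₀ α₀ ≤ a := by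
      have hcl := hlsc.isClosed_preimage (a : EReal)
      exact hcl.mem_of_tendsto hlim (Eventually.of_forall fun k => hαβ k)
    exact absurd ((iInf_le (fun μ => 𝒯 μ μ) α₀).trans hle) (not_le.2 ha2)
  · obtain ⟨μ, hμ⟩ := iInf_lt_iff.1 hL
    obtain ⟨a, ha1, ha2⟩ := EReal.lt_iff_exists_real_btwn.1 hμ
    refine Eventually.of_forall fun n => ?_
    have hn1 : (0 : ℝ) < n + 1 := by positivity
    refine lt_of_le_of_lt ?_ ha2
    refine (mul_le_mul_of_nonneg_left ((iInf_le _ (μ, μ)).trans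
      (iterT_upper 𝒯 μ a ha1.le n)) (EReal.coe_nonneg.2 (by positivity))).trans (le_of_eq ?_)
    rw [← EReal.coe_mul, inv_mul_cancel_left₀ hn1.ne']
end

section
/- Let T be a backward Kantorovich operator on a compact metric space X with finite Mather constant c. If g ∈ USC_σ(X) is bounded above and is a very proper backward solution at level k, meaning Tg + k = g pointwise and ∫_X g dμ > −∞ for some minimal measure μ, then k = c. -/
open MeasureTheory Filter Topology
open scoped ENNReal

lemma iterT_bdd {X : Type*} [MeasurableSpace X]
    (𝒯 : ProbabilityMeasure X → ProbabilityMeasure X → EReal)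
    (m : ℝ) (hm : ∀ μ ν, (m : EReal) ≤ 𝒯 μ ν) (n : ℕ) :
    ∃ r : ℝ, ∀ μ ν, (r : EReal) ≤ iterT 𝒯 n μ ν := by
  induction n with
  | zero => exact ⟨m, hm⟩
  | succ n ih =>
    obtain ⟨r, hr⟩ := ih
    refine ⟨m + r, fun μ ν => ?_⟩
    rw [EReal.coe_add]
    exact le_iInf fun σ => add_le_add (hm μ σ) (hr σ ν)

lemma exists_convex {X : Type*} [MeasurableSpace X] (μ₁ μ₂ : ProbabilityMeasure X) (t : ℝ)
    (h0 : 0 ≤ t) (h1 : t ≤ 1) : ∃ μ : ProbabilityMeasure X, (μ : Measure X) =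
        ENNReal.ofReal t • (μ₁ : Measure X) + ENNReal.ofReal (1 - t) • (μ₂ : Measure X) := by
  refine ⟨⟨ENNReal.ofReal t • (μ₁ : Measure X) + ENNReal.ofReal (1 - t) • (μ₂ : Measure X),
    ⟨?_⟩⟩, rfl⟩
  simp only [Measure.add_apply, Measure.smul_apply, measure_univ, smul_eq_mul, mul_one]
  rw [← ENNReal.ofReal_add h0 (by linarith)]
  simp

lemma integral_convex {X : Type*} [MetricSpace X] [MeasurableSpace X] [BorelSpace X]
    (μ₁ μ₂ μ : ProbabilityMeasure X) (t : ℝ)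
    (h0 : 0 ≤ t) (h1 : t ≤ 1) (h : (μ : Measure X) =
        ENNReal.ofReal t • (μ₁ : Measure X) + ENNReal.ofReal (1 - t) • (μ₂ : Measure X))
    (f : BoundedContinuousFunction X ℝ) :
    ∫ x, f x ∂(μ : Measure X) =
      t * ∫ x, f x ∂(μ₁ : Measure X) + (1 - t) * ∫ x, f x ∂(μ₂ : Measure X) := by
  rw [h, integral_add_measure, integral_smul_measure, integral_smul_measure,
    ENNReal.toReal_ofReal h0, ENNReal.toReal_ofReal (by linarith)]
  · simp
  · exact (f.integrable _).smul_measure (by simp)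
  · exact (f.integrable _).smul_measure (by simp)

lemma chain_avg {X : Type*} [MetricSpace X] [MeasurableSpace X] [BorelSpace X]
    (𝒯 : ProbabilityMeasure X → ProbabilityMeasure X → EReal)
    (m : ℝ) (hm : ∀ μ ν, (m : EReal) ≤ 𝒯 μ ν)
    (hconv : ∀ (μ₁ ν₁ μ₂ ν₂ μ ν : ProbabilityMeasure X) (t : ℝ), 0 ≤ t → t ≤ 1 →
      (μ : Measure X) =
        ENNReal.ofReal t • (μ₁ : Measure X) + ENNReal.ofReal (1 - t) • (μ₂ : Measure X) →
      (ν : Measure X) =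
        ENNReal.ofReal t • (ν₁ : Measure X) + ENNReal.ofReal (1 - t) • (ν₂ : Measure X) →
      𝒯 μ ν ≤ (t : EReal) * 𝒯 μ₁ ν₁ + ((1 - t : ℝ) : EReal) * 𝒯 μ₂ ν₂)
    (n : ℕ) : ∀ (μ ν : ProbabilityMeasure X) (r : ℝ), iterT 𝒯 n μ ν < (r : EReal) →
      ∃ α β : ProbabilityMeasure X, 𝒯 α β ≤ ((r / (n + 1) : ℝ) : EReal) ∧
        ∀ f : BoundedContinuousFunction X ℝ,
          (n + 1) * ∫ x, f x ∂(α : Measure X) + ∫ x, f x ∂(ν : Measure X) =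
          (n + 1) * ∫ x, f x ∂(β : Measure X) + ∫ x, f x ∂(μ : Measure X) := by
  induction n with
  | zero =>
    intro μ ν r h
    refine ⟨μ, ν, ?_, fun f => ?_⟩
    · simpa [iterT] using le_of_lt h
    · simp [add_comm]
  | succ n ih =>
    intro μ ν r h
    obtain ⟨σ, hσ⟩ := iInf_lt_iff.1 h
    obtain ⟨q, hq⟩ := iterT_bdd 𝒯 m hm n
    have h1 := hm μ σ
    have h2 := hq σ ν
    generalize hA : 𝒯 μ σ = A at *
    generalize hB : iterT 𝒯 n σ ν = B at *
    induction A with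
    | bot => simp at h1
    | top =>
      rw [EReal.top_add_of_ne_bot (by rintro rfl; simp at h2)] at hσ
      simp at hσ
    | coe s =>
    induction B with
    | bot => simp at h2
    | top => simp at hσ
    | coe b =>
    norm_cast at hσ
    obtain ⟨α, β, hαβ, hf⟩ := ih σ ν (r - s) (by rw [hB]; exact_mod_cast (by linarith))
    have hn : (0 : ℝ) < n + 2 := by positivity
    have ht0 : (0 : ℝ) ≤ 1 / (n + 2) := by positivity
    have ht1 : 1 / ((n : ℝ) + 2) ≤ 1 := by
      rw [div_le_one hn]; have : (0 : ℝ) ≤ n := by positivity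
      linarith
    obtain ⟨α', hα'⟩ := exists_convex μ α _ ht0 ht1
    obtain ⟨β', hβ'⟩ := exists_convex σ β _ ht0 ht1
    refine ⟨α', β', (hconv _ _ _ _ _ _ _ ht0 ht1 hα' hβ').trans ?_, fun f => ?_⟩
    · rw [hA]
      calc _ ≤ ((1 / ((n : ℝ) + 2) : ℝ) : EReal) * (s : EReal) +
            ((1 - 1 / ((n : ℝ) + 2) : ℝ) : EReal) * (((r - s) / (n + 1) : ℝ) : EReal) := by
            gcongr
        _ = _ := by
            norm_cast
            push_cast
            field_simp
            try ring
    · rw [integral_convex _ _ _ _ ht0 ht1 hα' f, integral_convex _ _ _ _ ht0 ht1 hβ' f]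
      have := hf f
      push_cast
      field_simp
      linear_combination ((n : ℝ) + 2) * this

/-- Let `T` be a backward Kantorovich operator (monotone, affine on
constants) on a compact metric space `X` whose iterates satisfy the duality with the
convolution iterates `𝒯_n` of its transfer `𝒯`, and let `c` be the finite Mather constant.
If `g ∈ USC_σ(X)` is bounded above and a very proper backward solution at level `k`
(`T g + k = g` and `∫ g dμ > −∞`, i.e. `g` integrable, for some minimal measure `μ`),
then `k = c`. -/
theorem stmt7 {X : Type*} [MetricSpace X] [CompactSpace X] [MeasurableSpace X] [BorelSpace X]
    (𝒯 : ProbabilityMeasure X → ProbabilityMeasure X → EReal)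
    (hproper : ∃ μ ν, 𝒯 μ ν ≠ ⊤)
    (hbdd : ∃ m : ℝ, ∀ μ ν, (m : EReal) ≤ 𝒯 μ ν)
    (hlsc : LowerSemicontinuous
      (fun p : ProbabilityMeasure X × ProbabilityMeasure X => 𝒯 p.1 p.2))
    (hconv : ∀ (μ₁ ν₁ μ₂ ν₂ μ ν : ProbabilityMeasure X) (t : ℝ), 0 ≤ t → t ≤ 1 →
      (μ : Measure X) =
        ENNReal.ofReal t • (μ₁ : Measure X) + ENNReal.ofReal (1 - t) • (μ₂ : Measure X) →
      (ν : Measure X) =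
        ENNReal.ofReal t • (ν₁ : Measure X) + ENNReal.ofReal (1 - t) • (ν₂ : Measure X) →
      𝒯 μ ν ≤ (t : EReal) * 𝒯 μ₁ ν₁ + ((1 - t : ℝ) : EReal) * 𝒯 μ₂ ν₂)
    (c : ℝ) (hc : (c : EReal) = ⨅ μ, 𝒯 μ μ)
    (μ : ProbabilityMeasure X) (hmin : 𝒯 μ μ = (c : EReal))
    (T : (X → ℝ) → X → ℝ)
    (hmono : ∀ f₁ f₂ : X → ℝ, (∀ x, f₁ x ≤ f₂ x) → ∀ x, T f₁ x ≤ T f₂ x)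
    (haff : ∀ (f : X → ℝ) (a : ℝ) (x : X), T (fun y => f y + a) x = T f x + a)
    (g : X → ℝ)
    (hUSCσ : ∃ u : ℕ → X → ℝ, Monotone u ∧ (∀ n, UpperSemicontinuous (u n)) ∧
      ∀ x, Tendsto (fun n => u n x) atTop (nhds (g x)))
    (hbddabove : ∃ M : ℝ, ∀ x, g x ≤ M)
    (hveryproper : Integrable g (μ : Measure X))
    (k : ℝ) (hsol : ∀ x, T g x + k = g x)
    (hdual : ∀ n : ℕ,
      (((∫ x, (T^[n + 1]) g x ∂(μ : Measure X)) : ℝ) : EReal) =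
        ⨆ ν : ProbabilityMeasure X,
          (((∫ x, g x ∂(ν : Measure X)) : ℝ) : EReal) - iterT 𝒯 n μ ν) :
    k = c := by
  obtain ⟨m, hm⟩ := hbdd
  obtain ⟨M, hM⟩ := hbddabove
  set G := ∫ x, g x ∂(μ : Measure X) with hG
  have hTg : ∀ n : ℕ, (T^[n]) g = fun x => g x + (-(n * k)) := by
    intro n
    induction n with
    | zero => simp
    | succ n ih =>
      rw [Function.iterate_succ_apply', ih]
      funext x
      rw [haff]
      have := hsol x
      push_cast
      linarith
  have hint : ∀ n : ℕ, ∫ x, (T^[n]) g x ∂(μ : Measure X) = G - n * k := by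
    intro n
    rw [hTg n, integral_add hveryproper (integrable_const _)]
    simp [hG, sub_eq_add_neg]
  simp only [hint] at hdual
  apply le_antisymm
  · have h := hdual 0
    have h2 := le_iSup (fun ν : ProbabilityMeasure X =>
          (((∫ x, g x ∂(ν : Measure X)) : ℝ) : EReal) - iterT 𝒯 0 μ ν) μ
    rw [← h] at h2
    simp only [iterT, hmin] at h2
    rw [← hG] at h2
    norm_cast at h2
    simp at h2
    linarith
  by_contra! hkc
  have hgν : ∀ ν : ProbabilityMeasure X, ∫ x, g x ∂(ν : Measure X) ≤ max M 0 := by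
    intro ν
    by_cases hi : Integrable g (ν : Measure X)
    · have := integral_mono hi (integrable_const M) hM
      simp at this
      exact this.trans (le_max_left _ _)
    · rw [integral_undef hi]; exact le_max_right _ _
  set C := max M 0 - G + 1 with hC
  have key : ∀ n : ℕ, ∃ p : ProbabilityMeasure X × ProbabilityMeasure X, ∃ ν : ProbabilityMeasure X,
      𝒯 p.1 p.2 ≤ ((k + C / (n + 1) : ℝ) : EReal) ∧
        ∀ f : BoundedContinuousFunction X ℝ,
          (n + 1) * ∫ x, f x ∂(p.1 : Measure X) + ∫ x, f x ∂(ν : Measure X) =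
          (n + 1) * ∫ x, f x ∂(p.2 : Measure X) + ∫ x, f x ∂(μ : Measure X) := by
    intro n
    have h := hdual n
    have hlt : ((G - ((n + 1 : ℕ) : ℝ) * k - 1 : ℝ) : EReal) < ⨆ ν : ProbabilityMeasure X,
          (((∫ x, g x ∂(ν : Measure X)) : ℝ) : EReal) - iterT 𝒯 n μ ν := by
      rw [← h]; exact_mod_cast (by linarith)
    obtain ⟨ν, hν⟩ := lt_iSup_iff.1 hlt
    have hit : iterT 𝒯 n μ ν < ((C + (n + 1) * k : ℝ) : EReal) := by
      have h3 := hgν ν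
      generalize iterT 𝒯 n μ ν = B at *
      induction B with
      | bot => exact EReal.bot_lt_coe _
      | top => simp at hν
      | coe b =>
        norm_cast at hν ⊢
        push_cast at hν ⊢
        linarith
    obtain ⟨α, β, h1, h2⟩ := chain_avg 𝒯 m hm hconv n μ ν _ hit
    refine ⟨(α, β), ν, ?_, h2⟩
    convert h1 using 2
    field_simp
    ring
  choose p ν hp1 hp2 using key
  let F : Ultrafilter ℕ := Filter.hyperfilter ℕ
  have hF : (F : Filter ℕ) ≤ atTop := by
    rw [← Nat.cofinite_eq_atTop]; exact Filter.hyperfilter_le_cofinite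
  obtain ⟨⟨a, b⟩, -, hab⟩ := isCompact_univ.ultrafilter_le_nhds (F.map p) (by simp)
  have hab : Tendsto p F (𝓝 (a, b)) := hab
  have ha : Tendsto (fun n => (p n).1) F (𝓝 a) := (continuous_fst.tendsto _).comp hab
  have hb : Tendsto (fun n => (p n).2) F (𝓝 b) := (continuous_snd.tendsto _).comp hab
  have hEq : a = b := by
    apply Subtype.ext
    change (a : Measure X) = (b : Measure X)
    apply ext_of_forall_integral_eq_of_IsFiniteMeasure
    intro f
    have h1 := ProbabilityMeasure.tendsto_iff_forall_integral_tendsto.1 ha f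
    have h2 := ProbabilityMeasure.tendsto_iff_forall_integral_tendsto.1 hb f
    have h3 : Tendsto (fun n : ℕ => 2 * ‖f‖ / ((n : ℝ) + 1)) F (𝓝 0) := by
      refine Tendsto.mono_left ?_ hF
      simpa [div_eq_mul_inv] using
        (tendsto_one_div_add_atTop_nhds_zero_nat (𝕜 := ℝ)).const_mul (2 * ‖f‖)
    have h4 : Tendsto (fun n => ∫ x, f x ∂((p n).1 : Measure X) - ∫ x, f x ∂((p n).2 : Measure X))
        F (𝓝 0) := by
      refine squeeze_zero_norm (fun n => ?_) h3
      have e := hp2 n f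
      have b1 := f.norm_integral_le_norm (μ : Measure X)
      have b2 := f.norm_integral_le_norm (ν n : Measure X)
      rw [Real.norm_eq_abs, abs_le] at b1 b2
      have hn : (0 : ℝ) < n + 1 := by positivity
      rw [Real.norm_eq_abs, le_div_iff₀ hn, ← abs_of_pos hn, ← abs_mul, abs_le]
      constructor <;> linarith
    exact sub_eq_zero.1 (tendsto_nhds_unique (h1.sub h2) h4)
  subst hEq
  obtain ⟨y, hky, hyc⟩ := exists_between hkc
  have hya : (y : EReal) < 𝒯 a a := by
    have : (c : EReal) ≤ 𝒯 a a := by rw [hc]; exact iInf_le _ a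
    exact lt_of_lt_of_le (by exact_mod_cast hyc) this
  have e1 := hab.eventually (hlsc (a, a) _ hya)
  have e2 : Tendsto (fun n : ℕ => k + C / ((n : ℝ) + 1)) F (𝓝 k) := by
    refine Tendsto.mono_left ?_ hF
    simpa [mul_div_assoc, div_eq_mul_inv] using
      ((tendsto_one_div_add_atTop_nhds_zero_nat (𝕜 := ℝ)).const_mul C).const_add k
  obtain ⟨n, hn1, hn2⟩ := (e1.and (e2.eventually (gt_mem_nhds hky))).exists
  have := lt_of_lt_of_le hn1 (hp1 n)
  have := EReal.coe_lt_coe_iff.1 this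
  linarith
end

section
/- Let 𝒯 be an idempotent backward linear transfer on P(X) × P(X), i.e., 𝒯 = 𝒯 ⋆ 𝒯 where ⋆ is inf-convolution. Then its Mather constant is zero: inf_{μ ∈ P(X)} 𝒯(μ, μ) = 0, and the set 𝒩 = {μ : 𝒯(μ, μ) = 0} is non-empty. -/
open MeasureTheory
open scoped ENNReal

theorem exists_mid {X : Type*} [MetricSpace X] [CompactSpace X] [MeasurableSpace X] [BorelSpace X]
    (μ₁ μ₂ : ProbabilityMeasure X) : ∃ μ : ProbabilityMeasure X,
      (μ : Measure X) = ENNReal.ofReal (1/2) • (μ₁ : Measure X)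
        + ENNReal.ofReal (1 - 1/2) • (μ₂ : Measure X) ∧
      ∀ f : BoundedContinuousFunction X ℝ, ∫ x, f x ∂(μ : Measure X) =
        (∫ x, f x ∂(μ₁ : Measure X) + ∫ x, f x ∂(μ₂ : Measure X)) / 2 := by
  have hp : IsProbabilityMeasure (ENNReal.ofReal (1/2) • (μ₁ : Measure X)
        + ENNReal.ofReal (1 - 1/2) • (μ₂ : Measure X)) := by
    constructor
    simp only [Measure.add_apply, Measure.smul_apply, measure_univ, smul_eq_mul, mul_one]
    rw [← ENNReal.ofReal_add (by norm_num) (by norm_num)]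
    norm_num
  refine ⟨⟨_, hp⟩, rfl, fun f => ?_⟩
  simp only [ProbabilityMeasure.coe_mk]
  rw [integral_add_measure ((f.integrable _).smul_measure ENNReal.ofReal_ne_top)
    ((f.integrable _).smul_measure ENNReal.ofReal_ne_top),
    integral_smul_measure, integral_smul_measure, ENNReal.toReal_ofReal (by norm_num),
    ENNReal.toReal_ofReal (by norm_num), smul_eq_mul, smul_eq_mul]
  ring

/-- Let `𝒯` be an idempotent backward linear transfer on `P(X) × P(X)`,
i.e. `𝒯 = 𝒯 ⋆ 𝒯` for the inf-convolution. Then its Mather constant is zero: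
`inf_μ 𝒯(μ, μ) = 0`, and the set `𝒩 = {μ : 𝒯(μ, μ) = 0}` is non-empty. -/
theorem stmt12 {X : Type*} [MetricSpace X] [CompactSpace X] [MeasurableSpace X] [BorelSpace X]
    (𝒯 : ProbabilityMeasure X → ProbabilityMeasure X → EReal)
    (hproper : ∃ μ ν, 𝒯 μ ν ≠ ⊤)
    (hbdd : ∃ m : ℝ, ∀ μ ν, (m : EReal) ≤ 𝒯 μ ν)
    (hlsc : LowerSemicontinuous
      (fun p : ProbabilityMeasure X × ProbabilityMeasure X => 𝒯 p.1 p.2))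
    (hconv : ∀ (μ₁ ν₁ μ₂ ν₂ μ ν : ProbabilityMeasure X) (t : ℝ), 0 ≤ t → t ≤ 1 →
      (μ : Measure X) =
        ENNReal.ofReal t • (μ₁ : Measure X) + ENNReal.ofReal (1 - t) • (μ₂ : Measure X) →
      (ν : Measure X) =
        ENNReal.ofReal t • (ν₁ : Measure X) + ENNReal.ofReal (1 - t) • (ν₂ : Measure X) →
      𝒯 μ ν ≤ (t : EReal) * 𝒯 μ₁ ν₁ + ((1 - t : ℝ) : EReal) * 𝒯 μ₂ ν₂)
    (hid : ∀ μ ν : ProbabilityMeasure X,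
      𝒯 μ ν = ⨅ σ : ProbabilityMeasure X, (𝒯 μ σ + 𝒯 σ ν)) :
    (⨅ μ : ProbabilityMeasure X, 𝒯 μ μ) = 0 ∧
    ∃ μ : ProbabilityMeasure X, 𝒯 μ μ = 0 := by
  obtain ⟨m, hm⟩ := hbdd
  have hbot : ∀ μ ν, 𝒯 μ ν ≠ ⊥ := fun μ ν h => by
    have := hm μ ν
    rw [h] at this
    simp at this
  have hnonneg : ∀ μ, 0 ≤ 𝒯 μ μ := by
    intro μ
    by_contra! hneg
    have htop : 𝒯 μ μ ≠ ⊤ := fun h => by simp [h] at hneg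
    obtain ⟨a, ha⟩ : ∃ a : ℝ, 𝒯 μ μ = a := ⟨_, (EReal.coe_toReal htop (hbot μ μ)).symm⟩
    have h2 : 𝒯 μ μ ≤ 𝒯 μ μ + 𝒯 μ μ := by
      conv_lhs => rw [hid μ μ]
      exact iInf_le _ μ
    rw [ha] at h2 hneg
    norm_cast at h2 hneg
    linarith
  have key : ∀ (k : ℕ) (μ ν : ProbabilityMeasure X) (c : ℝ), 𝒯 μ ν < c →
      ∃ α β : ProbabilityMeasure X, 𝒯 α β < ((c / 2 ^ k : ℝ) : EReal) ∧
        ∀ f : BoundedContinuousFunction X ℝ,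
          ∫ x, f x ∂(α : Measure X) = ∫ x, f x ∂(β : Measure X) +
          (∫ x, f x ∂(μ : Measure X) - ∫ x, f x ∂(ν : Measure X)) / 2 ^ k := by
    intro k
    induction k with
    | zero =>
      intro μ ν c h
      exact ⟨μ, ν, by simpa using h, fun f => by simp⟩
    | succ k ih =>
      intro μ ν c h
      rw [hid μ ν, iInf_lt_iff] at h
      obtain ⟨σ, hσ⟩ := h
      have h1 : 𝒯 μ σ ≠ ⊤ := fun h => by
        rw [h, EReal.top_add_of_ne_bot (hbot _ _)] at hσ
        simp at hσ
      have h2 : 𝒯 σ ν ≠ ⊤ := fun h => by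
        rw [h, EReal.add_top_of_ne_bot (hbot _ _)] at hσ
        simp at hσ
      obtain ⟨a, ha⟩ : ∃ a : ℝ, 𝒯 μ σ = a := ⟨_, (EReal.coe_toReal h1 (hbot _ _)).symm⟩
      obtain ⟨b, hb⟩ : ∃ a : ℝ, 𝒯 σ ν = a := ⟨_, (EReal.coe_toReal h2 (hbot _ _)).symm⟩
      rw [ha, hb] at hσ
      norm_cast at hσ
      obtain ⟨α₁, β₁, hT₁, hf₁⟩ := ih μ σ (a + (c - a - b) / 2) (by
        rw [ha]; norm_cast; linarith)
      obtain ⟨α₂, β₂, hT₂, hf₂⟩ := ih σ ν (b + (c - a - b) / 2) (by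
        rw [hb]; norm_cast; linarith)
      obtain ⟨α, hα, hαf⟩ := exists_mid α₁ α₂
      obtain ⟨β, hβ, hβf⟩ := exists_mid β₁ β₂
      refine ⟨α, β, ?_, fun f => ?_⟩
      · refine (hconv α₁ β₁ α₂ β₂ α β (1/2) (by norm_num) (by norm_num) hα hβ).trans_lt ?_
        obtain ⟨x, hx⟩ : ∃ a : ℝ, 𝒯 α₁ β₁ = a :=
          ⟨_, (EReal.coe_toReal (hT₁.trans_le le_top).ne (hbot _ _)).symm⟩
        obtain ⟨y, hy⟩ : ∃ a : ℝ, 𝒯 α₂ β₂ = a :=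
          ⟨_, (EReal.coe_toReal (hT₂.trans_le le_top).ne (hbot _ _)).symm⟩
        rw [hx] at hT₁ ⊢
        rw [hy] at hT₂ ⊢
        rw [EReal.coe_lt_coe_iff] at hT₁ hT₂
        rw [← EReal.coe_mul, ← EReal.coe_mul, ← EReal.coe_add, EReal.coe_lt_coe_iff]
        have : c / 2 ^ (k+1) = ((a + (c - a - b) / 2) / 2 ^ k + (b + (c - a - b) / 2) / 2 ^ k) / 2 := by
          rw [pow_succ]; field_simp; ring
        rw [this]
        linarith
      · rw [hαf, hβf, hf₁, hf₂, pow_succ]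
        field_simp
        ring
  have hex : ∃ μ : ProbabilityMeasure X, 𝒯 μ μ = 0 := by
    obtain ⟨μ, ν, hμν⟩ := hproper
    obtain ⟨a, ha⟩ : ∃ a : ℝ, 𝒯 μ ν = a := ⟨_, (EReal.coe_toReal hμν (hbot _ _)).symm⟩
    choose α β hT hf using fun k => key k μ ν (a + 1) (by rw [ha]; norm_cast; linarith)
    let U : Ultrafilter ℕ := Filter.hyperfilter ℕ
    have hU : (U : Filter ℕ) ≤ Filter.atTop := by
      rw [← Nat.cofinite_eq_atTop]; exact Filter.hyperfilter_le_cofinite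
    obtain ⟨b, -, hb⟩ := (isCompact_univ (X := ProbabilityMeasure X)).ultrafilter_le_nhds
      (U.map β) (by simp)
    have hb : Filter.Tendsto β U (nhds b) := hb
    have hlim : ∀ r : ℝ, Filter.Tendsto (fun k : ℕ => r / 2 ^ k) U (nhds 0) := fun r =>
      (tendsto_const_nhds.div_atTop (tendsto_pow_atTop_atTop_of_one_lt one_lt_two)).mono_left hU
    have hα : Filter.Tendsto α U (nhds b) := by
      rw [ProbabilityMeasure.tendsto_iff_forall_integral_tendsto] at hb ⊢
      intro f
      have := (hb f).add (hlim (∫ x, f x ∂(μ : Measure X) - ∫ x, f x ∂(ν : Measure X)))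
      rw [add_zero] at this
      exact this.congr fun k => (hf k f).symm
    refine ⟨b, le_antisymm ?_ (hnonneg b)⟩
    by_contra! hpos
    obtain ⟨y, hy0, hy⟩ := EReal.lt_iff_exists_real_btwn.1 hpos
    have hev := (hα.prodMk_nhds hb).eventually (hlsc (b, b) y hy)
    have hev2 := (hlim (a + 1)).eventually (gt_mem_nhds (EReal.coe_pos.1 hy0))
    obtain ⟨k, h1, h2⟩ := (hev.and hev2).exists
    have h3 := h1.trans (hT k)
    rw [EReal.coe_lt_coe_iff] at h3
    linarith
  refine ⟨le_antisymm ?_ (le_iInf hnonneg), hex⟩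
  obtain ⟨μ, hμ⟩ := hex
  exact (iInf_le _ μ).trans hμ.le
end

section
/- Let 𝒯 be an idempotent backward linear transfer on P(X) × P(X) and 𝒩 = {μ : 𝒯(μ, μ) = 0}. Then 𝒯 is Null-factorizable: for all μ, ν ∈ P(X), 𝒯(μ, ν) = inf{𝒯(μ, σ) + 𝒯(σ, ν) : σ ∈ 𝒩}. -/
open MeasureTheory
open scoped ENNReal

/-- Abstract version on a compact space: idempotent, lower semicontinuous, bounded below. -/
theorem null_factor_aux {P : Type*} [TopologicalSpace P] [CompactSpace P]
    (T : P → P → EReal)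
    (hbdd : ∃ m : ℝ, ∀ μ ν, (m : EReal) ≤ T μ ν)
    (hlsc : LowerSemicontinuous (fun p : P × P => T p.1 p.2))
    (hid : ∀ μ ν : P, T μ ν = ⨅ σ : P, (T μ σ + T σ ν)) (μ ν : P) (hfin : T μ ν ≠ ⊤) :
    ∃ σ, T σ σ = 0 ∧ T μ σ + T σ ν ≤ T μ ν := by
  obtain ⟨m, hm⟩ := hbdd
  have hbot : ∀ a b, T a b ≠ ⊥ := fun a b h => by
    have := hm a b
    rw [h] at this
    exact absurd this (by simp)
  have tri : ∀ a b c, T a c ≤ T a b + T b c := fun a b c => by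
    rw [hid a c]; exact iInf_le _ b
  have hf : ∀ a c, LowerSemicontinuous (fun σ => T a σ + T σ c) := fun a c =>
    LowerSemicontinuous.add'
      (hlsc.comp (g := fun σ => (a, σ)) (by fun_prop))
      (hlsc.comp (g := fun σ => (σ, c)) (by fun_prop))
      (fun x => EReal.continuousAt_add (Or.inr (hbot _ _)) (Or.inl (hbot _ _)))
  have att : ∀ a c, ∃ b, T a b + T b c ≤ T a c := fun a c => by
    obtain ⟨b, -, hb⟩ := LowerSemicontinuousOn.exists_isMinOn (s := Set.univ) ⟨a, trivial⟩
      isCompact_univ ((hf a c).lowerSemicontinuousOn _)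
    refine ⟨b, ?_⟩
    rw [hid a c]
    exact le_iInf fun d => hb (Set.mem_univ d)
  choose g hg using att
  let s : ℕ → P := fun n => Nat.rec (g μ ν) (fun _ x => g x ν) n
  have hs : ∀ n, T (s n) (s (n + 1)) + T (s (n + 1)) ν ≤ T (s n) ν := fun n => hg (s n) ν
  have hc : ∀ n, T μ (s n) + T (s n) ν ≤ T μ ν := by
    intro n
    induction n with
    | zero => exact hg μ ν
    | succ n ih =>
      calc T μ (s (n + 1)) + T (s (n + 1)) ν
          ≤ (T μ (s n) + T (s n) (s (n + 1))) + T (s (n + 1)) ν := by gcongr; exact tri _ _ _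
        _ = T μ (s n) + (T (s n) (s (n + 1)) + T (s (n + 1)) ν) := add_assoc _ _ _
        _ ≤ T μ (s n) + T (s n) ν := by gcongr; exact hs n
        _ ≤ _ := ih
  have hj : ∀ i k, T (s i) (s (i + k + 1)) + T (s (i + k + 1)) ν ≤ T (s i) ν := by
    intro i k
    induction k with
    | zero => exact hs i
    | succ k ih =>
      calc T (s i) (s (i + k + 1 + 1)) + T (s (i + k + 1 + 1)) ν
          ≤ (T (s i) (s (i + k + 1)) + T (s (i + k + 1)) (s (i + k + 1 + 1)))
              + T (s (i + k + 1 + 1)) ν := by gcongr; exact tri _ _ _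
        _ = T (s i) (s (i + k + 1)) + (T (s (i + k + 1)) (s (i + k + 1 + 1))
              + T (s (i + k + 1 + 1)) ν) := add_assoc _ _ _
        _ ≤ T (s i) (s (i + k + 1)) + T (s (i + k + 1)) ν := by gcongr; exact hs (i + k + 1)
        _ ≤ _ := ih
  obtain ⟨c, hcc⟩ : ∃ c : ℝ, T μ ν = c := ⟨_, (EReal.coe_toReal hfin (hbot _ _)).symm⟩
  have hle : ∀ n, T (s n) ν ≤ ((c - m : ℝ) : EReal) := by
    intro n
    have h1 : (m : EReal) + T (s n) ν ≤ c := by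
      rw [← hcc]
      exact le_trans (by gcongr; exact hm _ _) (hc n)
    have hnb := hbot (s n) ν
    induction h : T (s n) ν with
    | bot => exact absurd h hnb
    | top => rw [h] at h1; simp at h1
    | coe x =>
      rw [h] at h1
      norm_cast at h1 ⊢
      linarith
  have hb : ∀ n, ∃ b : ℝ, T (s n) ν = b := fun n =>
    ⟨_, (EReal.coe_toReal (ne_top_of_le_ne_top (EReal.coe_ne_top _) (hle n)) (hbot _ _)).symm⟩
  choose b hb using hb
  have hbI : ∀ n, b n ∈ Set.Icc m (c - m) := fun n => by
    have h1 := hm (s n) ν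
    have h2 := hle n
    rw [hb n] at h1 h2
    exact ⟨by exact_mod_cast h1, by exact_mod_cast h2⟩
  obtain ⟨⟨σ, β⟩, -, hσ⟩ := IsCompact.exists_mapClusterPt
    (isCompact_univ.prod (isCompact_Icc (a := m) (b := c - m)))
    (f := Filter.atTop) (u := fun n : ℕ => ((s n, b n) : P × ℝ))
    (Filter.tendsto_principal.2 (Filter.Eventually.of_forall fun n => ⟨Set.mem_univ _, hbI n⟩))
  have hle0 : ∀ y : ℝ, (y : EReal) < T σ σ → y ≤ 0 := by
    intro y hy
    have hU : ∀ᶠ p : P × P in nhds (σ, σ), (y : EReal) < T p.1 p.2 := hlsc (σ, σ) y hy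
    rw [nhds_prod_eq, Filter.eventually_prod_self_iff (r := fun a b => (y : EReal) < T a b)] at hU
    obtain ⟨U, hU, hUU⟩ := hU
    refine le_of_forall_pos_le_add fun ε hε => ?_
    have hfr := (mapClusterPt_iff_frequently.1 hσ) (U ×ˢ Metric.ball β (ε / 2))
      (prod_mem_nhds hU (Metric.ball_mem_nhds _ (by positivity)))
    rw [Filter.frequently_atTop] at hfr
    obtain ⟨i, -, hi1, hi2⟩ := hfr 0
    obtain ⟨j, hij, hj1, hj2⟩ := hfr (i + 1)
    obtain ⟨k, rfl⟩ : ∃ k, j = i + k + 1 := ⟨j - (i + 1), by omega⟩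
    have h1 := hUU _ hi1 _ hj1
    have h2 := hj i k
    rw [hb i, hb (i + k + 1)] at h2
    have h3 : (y : EReal) + b (i + k + 1) ≤ b i := le_trans (add_le_add h1.le le_rfl) h2
    have h4 : y + b (i + k + 1) ≤ b i := by exact_mod_cast h3
    simp only [Metric.mem_ball, Real.dist_eq, abs_lt] at hi2 hj2
    linarith [hi2.1, hi2.2, hj2.1, hj2.2]
  have hnp : T σ σ ≤ 0 := by
    by_contra! h
    obtain ⟨y, h0, hy⟩ := EReal.lt_iff_exists_real_btwn.1 h
    have := hle0 y hy
    have h0' : (0 : ℝ) < y := by exact_mod_cast h0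
    linarith
  have hnn : 0 ≤ T σ σ := by
    obtain ⟨x, hx⟩ : ∃ x : ℝ, T σ σ = x :=
      ⟨_, (EReal.coe_toReal (ne_top_of_le_ne_top EReal.zero_ne_top hnp) (hbot _ _)).symm⟩
    have h := tri σ σ σ
    rw [hx] at h ⊢
    norm_cast at h ⊢
    linarith
  refine ⟨σ, le_antisymm hnp hnn, ?_⟩
  have hcl := (hf μ ν).isClosed_preimage (T μ ν)
  have hσ' : MapClusterPt σ Filter.atTop s := hσ.continuousAt_comp (f := Prod.fst) continuousAt_fst
  exact hcl.mem_of_mapClusterPt hσ' (Filter.Eventually.of_forall hc)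

/-- Let `𝒯` be an idempotent backward linear transfer on `P(X) × P(X)`
(`𝒯 = 𝒯 ⋆ 𝒯`) and `𝒩 = {σ : 𝒯(σ, σ) = 0}`. Then `𝒯` is Null-factorizable:
`𝒯(μ, ν) = inf { 𝒯(μ, σ) + 𝒯(σ, ν) : σ ∈ 𝒩 }` for all `μ, ν ∈ P(X)`. -/
theorem stmt13 {X : Type*} [MetricSpace X] [CompactSpace X] [MeasurableSpace X] [BorelSpace X]
    (𝒯 : ProbabilityMeasure X → ProbabilityMeasure X → EReal)
    (hproper : ∃ μ ν, 𝒯 μ ν ≠ ⊤)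
    (hbdd : ∃ m : ℝ, ∀ μ ν, (m : EReal) ≤ 𝒯 μ ν)
    (hlsc : LowerSemicontinuous
      (fun p : ProbabilityMeasure X × ProbabilityMeasure X => 𝒯 p.1 p.2))
    (hconv : ∀ (μ₁ ν₁ μ₂ ν₂ μ ν : ProbabilityMeasure X) (t : ℝ), 0 ≤ t → t ≤ 1 →
      (μ : Measure X) =
        ENNReal.ofReal t • (μ₁ : Measure X) + ENNReal.ofReal (1 - t) • (μ₂ : Measure X) →
      (ν : Measure X) =
        ENNReal.ofReal t • (ν₁ : Measure X) + ENNReal.ofReal (1 - t) • (ν₂ : Measure X) →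
      𝒯 μ ν ≤ (t : EReal) * 𝒯 μ₁ ν₁ + ((1 - t : ℝ) : EReal) * 𝒯 μ₂ ν₂)
    (hid : ∀ μ ν : ProbabilityMeasure X,
      𝒯 μ ν = ⨅ σ : ProbabilityMeasure X, (𝒯 μ σ + 𝒯 σ ν)) :
    ∀ μ ν : ProbabilityMeasure X,
      𝒯 μ ν = ⨅ σ ∈ {σ : ProbabilityMeasure X | 𝒯 σ σ = 0}, (𝒯 μ σ + 𝒯 σ ν) := by
  intro μ ν
  apply le_antisymm
  · refine le_iInf₂ fun σ _ => ?_
    rw [hid μ ν]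
    exact iInf_le _ σ
  · by_cases hfin : 𝒯 μ ν = ⊤
    · rw [hfin]; exact le_top
    · obtain ⟨σ, h0, h⟩ := null_factor_aux 𝒯 hbdd hlsc hid μ ν hfin
      exact (iInf₂_le σ h0).trans h
end

section
/- Let X be a compact metric space, σ : X → X continuous and surjective, and A : X → ℝ lower semi-continuous bounded below. Consider the transfer 𝒯(μ, ν) = ∫ A dμ if ν = σ_# μ (and +∞ otherwise), with Kantorovich operator Tg(x) = g(σ(x)) − A(x). Then the Mather constant satisfies c(𝒯) = inf{∫_X A dμ : μ ∈ P(X), σ_# μ = μ} = sup_{f ∈ C(X)} inf_{x ∈ X} {f(x) − f(σ(x)) + A(x)}. -/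
open MeasureTheory
open scoped ENNReal Classical

lemma approx_lsc {X : Type*} [MetricSpace X] [Nonempty X]
    (A : X → ℝ) (hA : LowerSemicontinuous A) (b : ℝ) (hb : ∀ x, b ≤ A x) :
    ∃ h : ℕ → C(X, ℝ), (∀ x, Monotone fun n => h n x) ∧ (∀ n x, b ≤ h n x) ∧
      (∀ n x, h n x ≤ A x) ∧
      ∀ x, Filter.Tendsto (fun n => h n x) Filter.atTop (nhds (A x)) := by
  have hbd : ∀ (n : ℕ) (x : X), BddBelow (Set.range fun y => A y + n * dist x y) := by
    intro n x
    refine ⟨b, ?_⟩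
    rintro _ ⟨y, rfl⟩
    have : 0 ≤ (n : ℝ) * dist x y := by positivity
    have := hb y
    simp only
    linarith
  have hle : ∀ (n : ℕ) (x y : X), (⨅ y, A y + n * dist x y) ≤ A y + n * dist x y :=
    fun n x y => ciInf_le (hbd n x) y
  have hcont : ∀ n : ℕ, Continuous fun x => ⨅ y, A y + n * dist x y := by
    intro n
    apply (LipschitzWith.of_le_add_mul (n : NNReal) _).continuous
    intro x y
    rw [← sub_le_iff_le_add]
    apply le_ciInf
    intro z
    have h1 := hle n x z
    have h2 : (n : ℝ) * dist x z ≤ n * dist x y + n * dist y z := by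
      rw [← mul_add]
      exact mul_le_mul_of_nonneg_left (dist_triangle _ _ _) (by positivity)
    have h3 : ((n : NNReal) : ℝ) = n := by simp
    rw [h3]
    linarith
  have hleA : ∀ (n : ℕ) (x : X), (⨅ y, A y + n * dist x y) ≤ A x := by
    intro n x
    simpa using hle n x x
  refine ⟨fun n => ⟨_, hcont n⟩, ?_, ?_, hleA, ?_⟩
  · intro x n m hnm
    apply le_ciInf
    intro z
    refine (hle n x z).trans ?_
    gcongr
  · intro n x
    apply le_ciInf
    intro y
    have : 0 ≤ (n : ℝ) * dist x y := by positivity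
    have := hb y
    linarith
  · intro x
    apply tendsto_order.2 ⟨?_, ?_⟩
    · intro a ha
      obtain ⟨a', haa', ha'⟩ := exists_between ha
      obtain ⟨δ, hδ, hball⟩ := Metric.eventually_nhds_iff.1 (hA x a' ha')
      obtain ⟨N, hN⟩ := exists_nat_gt ((a' - b) / δ)
      filter_upwards [Filter.eventually_ge_atTop N] with n hn
      refine haa'.trans_le ?_
      apply le_ciInf
      intro y
      by_cases hy : dist y x < δ
      · have := hball hy
        have : 0 ≤ (n : ℝ) * dist x y := by positivity
        linarith
      · rw [div_lt_iff₀ hδ] at hN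
        have h1 : (N : ℝ) * δ ≤ n * dist x y := by
          rw [dist_comm x y]
          push Not at hy
          gcongr
        have := hb y
        linarith
    · intro a ha
      exact Filter.Eventually.of_forall fun n => (hleA n x).trans_lt ha

lemma exists_functional {X : Type*} [MetricSpace X] [CompactSpace X] [Nonempty X]
    (σ : C(X, X)) (A : X → ℝ) (b : ℝ) (hb : ∀ x, b ≤ A x) (t : ℝ)
    (ht : ∀ f : C(X, ℝ), ∃ x, f x - f (σ x) + A x < t) :
    ∃ L : C(X, ℝ) →L[ℝ] ℝ, (∀ g : C(X, ℝ), (∀ x, 0 ≤ g x) → 0 ≤ L g) ∧ 0 < L 1 ∧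
      (∀ f : C(X, ℝ), L (f.comp σ) = L f) ∧
      ∀ h : C(X, ℝ), (∀ x, h x ≤ A x) → L h ≤ t * L 1 := by
  let U : Set C(X, ℝ) := {g | ∀ x, g x < 0}
  let S : Set C(X, ℝ) := {g | ∃ f h : C(X, ℝ), (∀ x, h x ≤ A x) ∧
    g = t • (1 : C(X, ℝ)) - h - (f - f.comp σ)}
  have hUc : Convex ℝ U := by
    intro g hg k hk p q hp hq hpq x
    have h1 := hg x
    have h2 := hk x
    simp only [ContinuousMap.add_apply, ContinuousMap.smul_apply, smul_eq_mul]
    rcases hp.eq_or_lt with rfl | hp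
    · have : q = 1 := by linarith
      subst this; linarith
    · nlinarith
  have hUo : IsOpen U := by
    have := ContinuousMap.isOpen_setOfPred_mapsTo (X := X) (Y := ℝ) isCompact_univ
      (isOpen_Iio (a := (0 : ℝ)))
    convert this using 1
    ext g
    simp [U, Set.MapsTo]
  have hSc : Convex ℝ S := by
    rintro _ ⟨f, h, hh, rfl⟩ _ ⟨f', h', hh', rfl⟩ p q hp hq hpq
    refine ⟨p • f + q • f', p • h + q • h', ?_, ?_⟩
    · intro x
      have h1 := mul_le_mul_of_nonneg_left (hh x) hp
      have h2 := mul_le_mul_of_nonneg_left (hh' x) hq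
      have h3 : A x = p * A x + q * A x := by rw [← add_mul, hpq, one_mul]
      simp only [ContinuousMap.add_apply, ContinuousMap.smul_apply, smul_eq_mul]
      linarith
    · ext x
      obtain rfl : q = 1 - p := by linarith
      simp
      ring
  have hd : Disjoint U S := by
    rw [Set.disjoint_left]
    rintro _ hU ⟨f, h, hh, rfl⟩
    obtain ⟨x, hx⟩ := ht f
    have h1 := hU x
    have h2 := hh x
    simp at h1
    linarith
  obtain ⟨L, u, hLU, hLS⟩ := geometric_hahn_banach_open hUc hUo hSc hd
  have hLS' : ∀ f h : C(X, ℝ), (∀ x, h x ≤ A x) →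
      u ≤ t * L 1 - L h - (L f - L (f.comp σ)) := by
    intro f h hh
    have := hLS _ ⟨f, h, hh, rfl⟩
    simpa only [map_sub, map_smul, smul_eq_mul] using this
  have hLU' : ∀ (g : C(X, ℝ)) (n e : ℝ), (∀ x, 0 ≤ g x) → 0 ≤ n → 0 < e →
      - n * L g - e * L 1 < u := by
    intro g n e hg hn he
    have := hLU ((-n) • g - e • (1 : C(X, ℝ))) (by
      intro x
      have := mul_nonneg hn (hg x)
      simp
      linarith)
    simpa only [map_sub, map_smul, smul_eq_mul] using this
  have hpos : ∀ g : C(X, ℝ), (∀ x, 0 ≤ g x) → 0 ≤ L g := by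
    intro g hg
    by_contra hneg
    push Not at hneg
    have := hLU' g ((|u| + |L 1|) / (- L g)) 1 hg
      (div_nonneg (by positivity) (by linarith)) one_pos
    have h2 : -((|u| + |L 1|) / (- L g)) * L g = |u| + |L 1| := by
      have : L g ≠ 0 := hneg.ne
      field_simp
    rw [h2] at this
    linarith [le_abs_self u, le_abs_self (L 1)]
  have hb' : ∀ x, (b • (1 : C(X, ℝ))) x ≤ A x := by intro x; simpa using hb x
  have h1nn : 0 ≤ L 1 := hpos 1 (by simp)
  have h1 : 0 < L 1 := by
    refine h1nn.lt_of_ne fun h0 => ?_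
    have k1 := hLU' 0 0 1 (by simp) le_rfl one_pos
    have k2 := hLS' 0 (b • 1) hb'
    simp [← h0] at k1 k2
    linarith
  have hu : 0 ≤ u := by
    by_contra hneg
    push Not at hneg
    have k1 := hLU' 0 0 (-u / L 1) (by simp) le_rfl (div_pos (by linarith) h1)
    have : -u / L 1 * L 1 = -u := by field_simp
    rw [this] at k1
    simp at k1
  refine ⟨L, hpos, h1, ?_, ?_⟩
  · intro f
    by_contra hne
    have hne' : L f - L (f.comp σ) ≠ 0 := fun h => hne (by linarith)
    set d := L f - L (f.comp σ) with hd
    set K := t * L 1 - L (b • 1)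
    have := hLS' (((K + 1) / d) • f) (b • 1) hb'
    have e : ((((K + 1) / d) • f).comp σ) = ((K + 1) / d) • (f.comp σ) := rfl
    rw [e, map_smul L _ f, map_smul L _ (f.comp σ), smul_eq_mul, smul_eq_mul, ← mul_sub, ← hd,
      div_mul_cancel₀ _ hne'] at this
    linarith
  · intro h hh
    have := hLS' 0 h hh
    simp at this
    linarith

lemma exists_measure {X : Type*} [MetricSpace X] [CompactSpace X] [Nonempty X]
    [MeasurableSpace X] [BorelSpace X]
    (σ : C(X, X)) (A : X → ℝ) (b : ℝ) (hb : ∀ x, b ≤ A x) (t : ℝ)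
    (ht : ∀ f : C(X, ℝ), ∃ x, f x - f (σ x) + A x < t) :
    ∃ μ : ProbabilityMeasure X, (μ : Measure X).map σ = (μ : Measure X) ∧
      ∀ h : C(X, ℝ), (∀ x, h x ≤ A x) → ∫ x, h x ∂(μ : Measure X) ≤ t := by
  obtain ⟨L, hpos, h1, hinv, hle⟩ := exists_functional σ A b hb t ht
  let Λ : CompactlySupportedContinuousMap X ℝ →ₚ[ℝ] ℝ := PositiveLinearMap.mk₀
    { toFun := fun g => (L 1)⁻¹ * L g.toContinuousMap
      map_add' := by
        intro f g
        have : (f + g).toContinuousMap = f.toContinuousMap + g.toContinuousMap := rfl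
        rw [this, map_add, mul_add]
      map_smul' := by
        intro c f
        have : (c • f).toContinuousMap = c • f.toContinuousMap := rfl
        rw [this, map_smul]
        simp
        ring }
    (by
      intro g hg
      exact mul_nonneg (inv_nonneg.2 h1.le) (hpos _ fun x => hg x))
  let μ := RealRMK.rieszMeasure Λ
  have hμ : ∀ f : C(X, ℝ), ∫ x, f x ∂μ = (L 1)⁻¹ * L f := fun f =>
    RealRMK.integral_rieszMeasure Λ (CompactlySupportedContinuousMap.continuousMapEquiv f)
  have hprob : IsProbabilityMeasure μ := by
    have := hμ 1
    rw [inv_mul_cancel₀ h1.ne'] at this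
    simp only [ContinuousMap.one_apply, integral_const, smul_eq_mul, mul_one, Measure.real] at this
    exact ⟨(ENNReal.toReal_eq_one_iff _).1 this⟩
  refine ⟨⟨μ, hprob⟩, ?_, ?_⟩
  · change μ.map σ = μ
    have := Measure.isProbabilityMeasure_map (μ := μ) σ.continuous.aemeasurable
    apply ext_of_forall_integral_eq_of_IsFiniteMeasure
    intro f
    rw [integral_map σ.continuous.aemeasurable
      f.continuous.measurable.aestronglyMeasurable]
    have e1 := hμ f.toContinuousMap
    have e2 := hμ (f.toContinuousMap.comp σ)
    rw [hinv, ← e1] at e2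
    exact e2
  · intro h hh
    change ∫ x, h x ∂μ ≤ t
    rw [hμ, inv_mul_le_iff₀ h1, mul_comm]
    exact hle h hh

/-- Let `X` be compact metric, `σ : X → X` continuous surjective, and
`A : X → ℝ` lower semi-continuous bounded below (by `b`). For the transfer
`𝒯(μ, ν) = ∫ A dμ` if `ν = σ_# μ` (and `+∞` otherwise), the Mather constant satisfies
`c(𝒯) = inf { ∫ A dμ : σ_# μ = μ } = sup_{f ∈ C(X)} inf_x { f(x) − f(σ(x)) + A(x) }`.
The (possibly infinite) integral `∫ A dμ` is computed as `b + ∫⁻ (A − b) dμ`. -/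
theorem stmt18 {X : Type*} [MetricSpace X] [CompactSpace X] [Nonempty X]
    [MeasurableSpace X] [BorelSpace X]
    (σ : X → X) (hσc : Continuous σ) (hσs : Function.Surjective σ)
    (A : X → ℝ) (hA : LowerSemicontinuous A)
    (b : ℝ) (hb : ∀ x, b ≤ A x)
    (val : MeasureTheory.ProbabilityMeasure X → EReal)
    (hval : ∀ μ : ProbabilityMeasure X,
      val μ = (b : EReal) +
        ((∫⁻ x, ENNReal.ofReal (A x - b) ∂(μ : Measure X) : ℝ≥0∞) : EReal))
    (𝒯 : ProbabilityMeasure X → ProbabilityMeasure X → EReal)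
    (h𝒯 : ∀ μ ν : ProbabilityMeasure X,
      𝒯 μ ν = if (μ : Measure X).map σ = (ν : Measure X) then val μ else ⊤) :
    (⨅ μ : ProbabilityMeasure X, 𝒯 μ μ) =
      (⨅ μ : {μ : ProbabilityMeasure X // (μ : Measure X).map σ = (μ : Measure X)},
        val μ) ∧
    (⨅ μ : ProbabilityMeasure X, 𝒯 μ μ) =
      ⨆ f : C(X, ℝ), ⨅ x : X, (((f x - f (σ x) + A x : ℝ)) : EReal) := by
  have hfirst : (⨅ μ : ProbabilityMeasure X, 𝒯 μ μ) =
      (⨅ μ : {μ : ProbabilityMeasure X // (μ : Measure X).map σ = (μ : Measure X)},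
        val μ) := by
    apply le_antisymm
    · refine le_iInf fun μ => (iInf_le _ μ.1).trans ?_
      rw [h𝒯, if_pos μ.2]
    · refine le_iInf fun μ => ?_
      rw [h𝒯]
      split_ifs with h
      · exact iInf_le (fun μ : {μ : ProbabilityMeasure X //
          (μ : Measure X).map σ = (μ : Measure X)} => val μ) ⟨μ, h⟩
      · exact le_top
  refine ⟨hfirst, ?_⟩
  rw [hfirst]
  apply le_antisymm
  · apply EReal.le_of_forall_lt_iff_le.1
    intro t hst
    have ht : ∀ f : C(X, ℝ), ∃ x, f x - f (σ x) + A x < t := by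
      intro f
      have h1 := (le_iSup (fun f : C(X, ℝ) =>
        ⨅ x : X, (((f x - f (σ x) + A x : ℝ)) : EReal)) f).trans_lt hst
      obtain ⟨x, hx⟩ := iInf_lt_iff.1 h1
      exact ⟨x, by exact_mod_cast hx⟩
    obtain ⟨μ, hinv, hμ⟩ := exists_measure ⟨σ, hσc⟩ A b hb t ht
    obtain ⟨h, hmono, hbh, hhA, hlim⟩ := approx_lsc A hA b hb
    refine (iInf_le _ ⟨μ, hinv⟩).trans ?_
    rw [hval]
    have hint : ∀ n, Integrable (fun x => h n x) (μ : Measure X) := fun n =>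
      (h n).continuous.integrable_of_hasCompactSupport (HasCompactSupport.of_compactSpace _)
    have hn : ∀ n, ∫⁻ x, ENNReal.ofReal (h n x - b) ∂(μ : Measure X)
        ≤ ENNReal.ofReal (t - b) := by
      intro n
      have hi : Integrable (fun x => h n x - b) (μ : Measure X) :=
        (hint n).sub (integrable_const b)
      rw [← ofReal_integral_eq_lintegral_ofReal hi
        (Filter.Eventually.of_forall fun x => sub_nonneg.2 (hbh n x))]
      apply ENNReal.ofReal_le_ofReal
      rw [integral_sub (hint n) (integrable_const b)]
      have := hμ (h n) (hhA n)
      simp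
      linarith
    have hT : ∫⁻ x, ENNReal.ofReal (A x - b) ∂(μ : Measure X) ≤ ENNReal.ofReal (t - b) := by
      refine le_of_tendsto' (lintegral_tendsto_of_tendsto_of_monotone
        (f := fun n x => ENNReal.ofReal (h n x - b)) ?_ ?_ ?_) hn
      · intro n
        have := (h n).continuous
        exact (ENNReal.continuous_ofReal.comp (this.sub continuous_const)).measurable.aemeasurable
      · refine Filter.Eventually.of_forall fun x n m hnm => ?_
        exact ENNReal.ofReal_le_ofReal (sub_le_sub_right (hmono x hnm) b)
      · refine Filter.Eventually.of_forall fun x => ?_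
        exact ENNReal.tendsto_ofReal ((hlim x).sub_const b)
    have htb : 0 ≤ t - b := by
      have := hμ (ContinuousMap.const X b) hb
      simp at this
      linarith
    calc (b : EReal) + ((∫⁻ x, ENNReal.ofReal (A x - b) ∂(μ : Measure X) : ℝ≥0∞) : EReal)
        ≤ (b : EReal) + ((ENNReal.ofReal (t - b) : ℝ≥0∞) : EReal) := by
          gcongr
          exact_mod_cast hT
      _ = t := by
          rw [EReal.coe_ennreal_ofReal, max_eq_left htb, ← EReal.coe_add]
          congr 1
          ring
  · refine iSup_le fun f => le_iInf fun ⟨μ, hinv⟩ => ?_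
    simp only
    rw [hval]
    apply EReal.ge_of_forall_gt_iff_ge.1
    intro r hr
    have hrx : ∀ x, r ≤ f x - f (σ x) + A x := by
      intro x
      have := hr.le.trans (iInf_le _ x)
      exact_mod_cast this
    by_cases htop : ∫⁻ x, ENNReal.ofReal (A x - b) ∂(μ : Measure X) = ⊤
    · rw [htop]
      simp
    have hAm : Measurable A := hA.measurable
    have hAb : Integrable (fun x => A x - b) (μ : Measure X) :=
      (lintegral_ofReal_ne_top_iff_integrable
        (hAm.sub_const b).aestronglyMeasurable
        (Filter.Eventually.of_forall fun x => sub_nonneg.2 (hb x))).1 htop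
    rw [← ofReal_integral_eq_lintegral_ofReal hAb
        (Filter.Eventually.of_forall fun x => sub_nonneg.2 (hb x)),
      EReal.coe_ennreal_ofReal, max_eq_left (integral_nonneg fun x => sub_nonneg.2 (hb x)),
      ← EReal.coe_add, EReal.coe_le_coe_iff]
    have hf : Integrable (fun x => f x) (μ : Measure X) :=
      f.continuous.integrable_of_hasCompactSupport (HasCompactSupport.of_compactSpace _)
    have hfσ : Integrable (fun x => f (σ x)) (μ : Measure X) :=
      (f.continuous.comp hσc).integrable_of_hasCompactSupport
        (HasCompactSupport.of_compactSpace _)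
    have e : ∫ x, f (σ x) ∂(μ : Measure X) = ∫ x, f x ∂(μ : Measure X) := by
      conv_rhs => rw [← hinv]
      rw [integral_map hσc.aemeasurable f.continuous.measurable.aestronglyMeasurable]
    have h1 : ∫ x, (r - b) ∂(μ : Measure X) ≤
        ∫ x, ((f x - f (σ x)) + (A x - b)) ∂(μ : Measure X) := by
      apply integral_mono (integrable_const _) ((hf.sub hfσ).add hAb)
      intro x
      have := hrx x
      simp only [Pi.add_apply, Pi.sub_apply]
      linarith
    have hi : Integrable (fun x => f x - f (σ x)) (μ : Measure X) := hf.sub hfσ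
    rw [integral_add hi hAb, integral_sub hf hfσ, e] at h1
    simp only [integral_const, probReal_univ, one_smul] at h1
    linarith
end
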